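/- arXiv:2605.21829 — 2 statements merged into one kernel-verified Lean document; each statement's English description precedes it below -/
import Mathlib

section
/- Let α be a finite nonempty type with cardinality N, and let f : α → List (Fin 3) be a prefix-free code, i.e., for all distinct a, b in α, f a is not a prefix of f b. Then ∑_{a ∈ α} (f a).length ≥ N · log₃(N), where log₃ denotes the base-3 logarithm (Real.logb 3). -/
theorem ud_of_prefix_free_aux (S : Set (List (Fin 3))) (h0 : [] ∉ S)
    (hS : ∀ u ∈ S, ∀ v ∈ S, u <+: v → u = v) : InformationTheory.UniquelyDecodable S := by
  intro L₁
  induction L₁ with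
  | nil =>
    intro L₂ _ h2 h
    cases L₂ with
    | nil => rfl
    | cons v L₂ =>
      exfalso
      have hv : v ∈ S := h2 v (by simp)
      have : v = [] := by
        simp only [List.flatten_nil, List.flatten_cons] at h
        exact (List.append_eq_nil_iff.mp h.symm).1
      exact h0 (this ▸ hv)
  | cons u L₁ ih =>
    intro L₂ h1 h2 h
    have hu : u ∈ S := h1 u (by simp)
    cases L₂ with
    | nil =>
      exfalso
      have : u = [] := by
        simp only [List.flatten_nil, List.flatten_cons] at h
        exact (List.append_eq_nil_iff.mp h).1
      exact h0 (this ▸ hu)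
    | cons v L₂ =>
      have hv : v ∈ S := h2 v (by simp)
      simp only [List.flatten_cons] at h
      have huv : u = v := by
        have p1 : u <+: v ++ L₂.flatten := ⟨_, h⟩
        have p2 : v <+: v ++ L₂.flatten := ⟨_, rfl⟩
        rcases List.prefix_or_prefix_of_prefix p1 p2 with p | p
        · exact hS u hu v hv p
        · exact (hS v hv u hu p).symm
      subst huv
      rw [ih L₂ (fun w hw => h1 w (by simp [hw])) (fun w hw => h2 w (by simp [hw]))
        (List.append_cancel_left h)]

theorem ternary_prefix_free_total_length (α : Type*) [Fintype α] [Nonempty α]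
    (N : ℕ) (hN : Fintype.card α = N) (f : α → List (Fin 3))
    (hpf : ∀ a b : α, a ≠ b → ¬ (f a <+: f b)) :
    ∑ a : α, ((f a).length : ℝ) ≥ (N : ℝ) * Real.logb 3 N := by
  classical
  by_cases h0 : ∃ a, f a = []
  · obtain ⟨a, ha⟩ := h0
    have h1 : N = 1 := by
      rw [← hN, Fintype.card_eq_one_iff]
      refine ⟨a, fun b => ?_⟩
      by_contra hb
      exact hpf a b (Ne.symm hb) (by simp [ha])
    subst h1
    simp only [Nat.cast_one, Real.logb_one, mul_zero]
    positivity
  have hinj : Function.Injective f := by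
    intro a b hab
    by_contra hne
    exact hpf a b hne (by rw [hab])
  have hud : InformationTheory.UniquelyDecodable
      ((Finset.univ.image f : Finset (List (Fin 3))) : Set (List (Fin 3))) := by
    apply ud_of_prefix_free_aux
    · simpa using h0
    · intro u hu v hv huv
      simp only [Finset.coe_image, Finset.coe_univ, Set.image_univ, Set.mem_range] at hu hv
      obtain ⟨a, rfl⟩ := hu
      obtain ⟨b, rfl⟩ := hv
      by_contra hne
      exact hpf a b (fun h => hne (by rw [h])) huv
  have hk := InformationTheory.kraft_mcmillan_inequality hud
  rw [Finset.sum_image (fun a _ b _ h => hinj h)] at hk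
  simp only [Fintype.card_fin, Nat.cast_ofNat] at hk
  have hNpos : (0 : ℝ) < N := by
    rw [← hN]; exact_mod_cast Fintype.card_pos
  have hterm : ∀ a : α, Real.log N - (f a).length * Real.log 3
      ≤ N * (1 / 3 : ℝ) ^ (f a).length - 1 := by
    intro a
    have h := Real.log_le_sub_one_of_pos (x := N * (1 / 3 : ℝ) ^ (f a).length) (by positivity)
    rw [Real.log_mul hNpos.ne' (by positivity), Real.log_pow, one_div, Real.log_inv] at h
    rw [one_div]
    linarith
  have hsum := Finset.sum_le_sum (fun a (_ : a ∈ Finset.univ) => hterm a)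
  rw [Finset.sum_sub_distrib, Finset.sum_sub_distrib, ← Finset.sum_mul, ← Finset.mul_sum] at hsum
  simp only [Finset.sum_const, Finset.card_univ, hN, nsmul_eq_mul, mul_one] at hsum
  have h3 : 0 < Real.log 3 := Real.log_pos (by norm_num)
  have := mul_le_mul_of_nonneg_left hk hNpos.le
  rw [ge_iff_le, Real.logb, ← mul_div_assoc, div_le_iff₀ h3]
  linarith
end

section
/- Let n be a positive natural number and π a permutation of Fin n. Then the number of tuples (σ_0, σ_1, …, σ_{n−1}) of permutations of Fin n such that for every i : Fin n: σ_i(π⁻¹(i)) = i and, for every p : Fin n, σ_i(p) < i ↔ π(p) < i, equals ∏_{i=0}^{n−1} i! · (n − 1 − i)!. In particular, this count is the same for every permutation π. -/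
open Nat

/-- Block of a position relative to `i`: before, at, after. -/
def blk {n : ℕ} (i q : Fin n) : Fin 3 := if q < i then 0 else if q = i then 1 else 2

lemma blk_eq_iff {n : ℕ} (i q r : Fin n) :
    blk i q = blk i r ↔ ((q < i ↔ r < i) ∧ (q = i ↔ r = i)) := by
  unfold blk
  split_ifs <;> simp <;> omega

lemma card_one {n : ℕ} (π : Equiv.Perm (Fin n)) (i : Fin n) :
    Nat.card {σ : Equiv.Perm (Fin n) //
        σ (π⁻¹ i) = i ∧ ∀ p : Fin n, σ p < i ↔ π p < i} = (i : ℕ)! * (n - 1 - (i : ℕ))! := by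
  have e : {σ : Equiv.Perm (Fin n) // σ (π⁻¹ i) = i ∧ ∀ p : Fin n, σ p < i ↔ π p < i} ≃
      {g : Equiv.Perm (Fin n) // blk i ∘ g = blk i} := by
    refine Equiv.subtypeEquiv (Equiv.mulRight π⁻¹) ?_
    intro σ
    simp only [funext_iff, Function.comp, blk_eq_iff, Equiv.coe_mulRight, Equiv.Perm.mul_apply]
    constructor
    · rintro ⟨h1, h2⟩ q
      refine ⟨by simpa using h2 (π⁻¹ q), ?_, ?_⟩
      · intro h
        exact π⁻¹.injective (σ.injective (h.trans h1.symm))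
      · rintro rfl
        exact h1
    · intro h
      exact ⟨(h i).2.2 rfl, fun p => by simpa using (h (π p)).1⟩
  rw [Nat.card_congr e, Nat.card_eq_fintype_card, DomMulAct.stabilizer_card]
  have h0 : Fintype.card {a // blk i a = 0} = i := by
    rw [Fintype.card_subtype, ← Fin.card_Iio i]
    congr 1
    ext a
    rw [Finset.mem_filter, Finset.mem_Iio]
    simp only [Finset.mem_univ, true_and]
    unfold blk
    split_ifs <;> simp <;> omega
  have h1 : Fintype.card {a // blk i a = 1} = 1 := by
    rw [Fintype.card_subtype, ← Finset.card_singleton i]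
    congr 1
    ext a
    rw [Finset.mem_filter, Finset.mem_singleton]
    simp only [Finset.mem_univ, true_and]
    unfold blk
    split_ifs <;> simp <;> omega
  have h2 : Fintype.card {a // blk i a = 2} = n - 1 - i := by
    rw [Fintype.card_subtype, ← Fin.card_Ioi i]
    congr 1
    ext a
    rw [Finset.mem_filter, Finset.mem_Ioi]
    simp only [Finset.mem_univ, true_and]
    unfold blk
    split_ifs <;> simp <;> omega
  rw [Fin.prod_univ_three, h0, h1, h2]
  simp

theorem count_chunk_tuples (n : ℕ) (hn : 0 < n) (π : Equiv.Perm (Fin n)) :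
    Nat.card {σ : Fin n → Equiv.Perm (Fin n) //
        ∀ i : Fin n, σ i (π⁻¹ i) = i ∧ ∀ p : Fin n, σ i p < i ↔ π p < i}
      = ∏ i : Fin n, (i : ℕ)! * (n - 1 - (i : ℕ))! := by
  rw [Nat.card_congr (Equiv.subtypePiEquivPi (p := fun (i : Fin n) (s : Equiv.Perm (Fin n)) =>
    s (π⁻¹ i) = i ∧ ∀ p : Fin n, s p < i ↔ π p < i)), Nat.card_pi]
  exact Finset.prod_congr rfl fun i _ => card_one π i
end
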